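/- Let σ : [0,1] → ℝ be absolutely continuous (or Lipschitz) with |σ'(t)| ≤ 8 almost everywhere, and let t₋ < t₊ in [0,1] satisfy |σ(t₋) − σ(t₊)| ≥ ε(1/2 − 1/50). Then the Lebesgue measure of {t ∈ [t₋, t₊] : dist(σ(t), (ε/2)ℤ) ≥ ε/100} is at least ε/20. -/

import Mathlib

open MeasureTheory Set

/-- A `K`-Lipschitz real function increases Lebesgue measure by at most the factor `K`. -/
lemma LipschitzWith.volume_image_le {K : NNReal} {f : ℝ → ℝ} (hf : LipschitzWith K f)
    (s : Set ℝ) : volume (f '' s) ≤ K * volume s := by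
  simpa [← hausdorffMeasure_real] using hf.hausdorffMeasure_image_le zero_le_one s

/-- A point of `[a, a + 12ε/25]` outside the `ε/100`-balls about the three multiples of `ε/2`
nearest to this interval is at distance at least `ε/100` from every multiple of `ε/2`. -/
lemma le_infDist_multiples_of_notMem_balls {ε a y : ℝ} (hε : 0 < ε)
    (hy : y ∈ Icc a (a + ε * (12 / 25)))
    (hball : ∀ i ∈ Finset.range 3,
      y ∉ Metric.ball (ε / 2 * (⌊a / (ε / 2)⌋ + i : ℝ)) (ε / 100)) :
    ε / 100 ≤ Metric.infDist y {y : ℝ | ∃ m : ℤ, y = (ε / 2) * m} := by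
  have hfloor : ε / 2 * ⌊a / (ε / 2)⌋ ≤ a := by
    have h := (le_div_iff₀ (half_pos hε)).1 (Int.floor_le (a / (ε / 2)))
    linarith
  have hfloor' : a < ε / 2 * (⌊a / (ε / 2)⌋ + 1) := by
    have h := (div_lt_iff₀ (half_pos hε)).1 (Int.lt_floor_add_one (a / (ε / 2)))
    linarith
  generalize ⌊a / (ε / 2)⌋ = m at *
  have hne : {y : ℝ | ∃ m : ℤ, y = (ε / 2) * m}.Nonempty := ⟨0, 0, by simp⟩
  refine (Metric.le_infDist hne).2 ?_
  rintro _ ⟨k, rfl⟩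
  by_contra! hlt
  have hk := abs_lt.1 (Real.dist_eq _ _ ▸ hlt)
  obtain ⟨hy₁, hy₂⟩ := hy
  have hmk : m ≤ k := by
    by_contra! h
    have h' : (k : ℝ) + 1 ≤ m := by exact_mod_cast h
    nlinarith
  have hkm : k ≤ m + 2 := by
    by_contra! h
    have h' : (m : ℝ) + 3 ≤ k := by exact_mod_cast (by omega : m + 3 ≤ k)
    nlinarith
  obtain ⟨i, rfl⟩ := Int.le.dest hmk
  refine hball i (Finset.mem_range.2 (by omega)) ?_
  simpa using hlt

/-- Most of an interval of length `12ε/25` is at distance at least `ε/100` from the multiples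
of `ε/2`. -/
lemma le_volume_Icc_inter_far_from_multiples {ε : ℝ} (hε : 0 < ε) (a : ℝ) :
    ENNReal.ofReal (ε * (2 / 5)) ≤ volume (Icc a (a + ε * (12 / 25)) ∩
      {y | ε / 100 ≤ Metric.infDist y {y : ℝ | ∃ m : ℤ, y = (ε / 2) * m}}) := by
  set B : Set ℝ := ⋃ i ∈ Finset.range 3,
    Metric.ball (ε / 2 * (⌊a / (ε / 2)⌋ + i : ℝ)) (ε / 100)
  have hvol : volume B ≤ ENNReal.ofReal (ε * (3 / 50)) := by
    refine (measure_biUnion_finset_le _ _).trans ?_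
    simp only [Real.volume_ball, Finset.sum_const, Finset.card_range, nsmul_eq_mul]
    rw [← ENNReal.ofReal_natCast, ← ENNReal.ofReal_mul (by positivity)]
    exact ENNReal.ofReal_le_ofReal (by push_cast; linarith)
  calc ENNReal.ofReal (ε * (2 / 5))
      ≤ ENNReal.ofReal (ε * (12 / 25) - ε * (3 / 50)) :=
        ENNReal.ofReal_le_ofReal (by linarith)
    _ = ENNReal.ofReal (ε * (12 / 25)) - ENNReal.ofReal (ε * (3 / 50)) :=
        ENNReal.ofReal_sub _ (by positivity)
    _ ≤ volume (Icc a (a + ε * (12 / 25))) - volume B := by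
        rw [Real.volume_Icc, add_sub_cancel_left]
        exact tsub_le_tsub_left hvol _
    _ ≤ volume (Icc a (a + ε * (12 / 25)) \ B) := le_measure_sdiff
    _ ≤ _ := by
        refine measure_mono fun y hy ↦ ⟨hy.1, ?_⟩
        refine le_infDist_multiples_of_notMem_balls hε hy.1 fun i hi hyi ↦ hy.2 ?_
        exact mem_biUnion hi hyi

theorem stmt_7 (ε : ℝ) (hε : 0 < ε) (σ : ℝ → ℝ) (hσ : LipschitzWith 8 σ)
    (tm tp : ℝ) (h01 : tm ∈ Set.Icc (0 : ℝ) 1) (h01' : tp ∈ Set.Icc (0 : ℝ) 1)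
    (hle : tm ≤ tp)
    (hfar : ε * (1 / 2 - 1 / 50) ≤ |σ tm - σ tp|) :
    ENNReal.ofReal (ε / 20) ≤
      MeasureTheory.volume
        {t ∈ Set.Icc tm tp |
          ε / 100 ≤ Metric.infDist (σ t) {y : ℝ | ∃ m : ℤ, y = (ε / 2) * m}} := by
  set S := {t ∈ Set.Icc tm tp |
    ε / 100 ≤ Metric.infDist (σ t) {y : ℝ | ∃ m : ℤ, y = (ε / 2) * m}}
  have hsub : Icc (min (σ tm) (σ tp)) (min (σ tm) (σ tp) + ε * (12 / 25)) ∩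
      {y | ε / 100 ≤ Metric.infDist y {y : ℝ | ∃ m : ℤ, y = (ε / 2) * m}} ⊆ σ '' S := by
    rintro y ⟨⟨hy₁, hy₂⟩, hyfar⟩
    have hmem : y ∈ uIcc (σ tm) (σ tp) := by
      have h := max_sub_min_eq_abs (σ tm) (σ tp)
      rw [abs_sub_comm] at h
      exact ⟨hy₁, by change y ≤ max _ _; linarith⟩
    obtain ⟨t, ht, rfl⟩ := intermediate_value_uIcc hσ.continuous.continuousOn hmem
    exact ⟨t, ⟨uIcc_of_le hle ▸ ht, hyfar⟩, rfl⟩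
  have key : ENNReal.ofReal (ε * (2 / 5)) ≤ 8 * volume S :=
    (le_volume_Icc_inter_far_from_multiples hε _).trans <|
      (measure_mono hsub).trans (hσ.volume_image_le S)
  have h8 : ENNReal.ofReal (ε * (2 / 5)) = 8 * ENNReal.ofReal (ε / 20) := by
    rw [← ENNReal.ofReal_ofNat 8, ← ENNReal.ofReal_mul (by norm_num)]
    ring_nf
  rw [h8] at key
  exact (ENNReal.mul_le_mul_iff_right (by norm_num) (by norm_num)).1 key
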